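/- Let R be a J-regular ring and n ≥ 1 a fixed integer. Then every n-generated small right ideal of R is a right annihilator (i.e., rl(I) = I) if and only if every n-generated right ideal of R is a right annihilator. -/

import Mathlib

open Pointwise

/-- The left annihilator `l(X) = {r : ∀ x ∈ X, r * x = 0}` of a subset of a ring. -/
def lAnn (R : Type*) [Ring R] (X : Set R) : Set R := {r : R | ∀ x ∈ X, r * x = 0}

/-- The right annihilator `r(X) = {r : ∀ x ∈ X, x * r = 0}` of a subset of a ring. -/
def rAnn (R : Type*) [Ring R] (X : Set R) : Set R := {r : R | ∀ x ∈ X, x * r = 0}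

/-- A right ideal of `R` (a submodule of `R` as a right `R`-module, i.e. an
`Rᵐᵒᵖ`-submodule) is small if `I + K ≠ R` for every proper right ideal `K`. -/
def IsSmallRightIdeal (R : Type*) [Ring R] (I : Submodule Rᵐᵒᵖ R) : Prop :=
  ∀ K : Submodule Rᵐᵒᵖ R, K ≠ ⊤ → I ⊔ K ≠ ⊤

/-- A left ideal of `R` is small if `I + K ≠ R` for every proper left ideal `K`. -/
def IsSmallLeftIdeal (R : Type*) [Ring R] (I : Ideal R) : Prop :=
  ∀ K : Ideal R, K ≠ ⊤ → I ⊔ K ≠ ⊤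

/-- `R` is right small dual if `rl(I) = I` for every small right ideal `I`. -/
def IsRightSmallDual (R : Type*) [Ring R] : Prop :=
  ∀ I : Submodule Rᵐᵒᵖ R, IsSmallRightIdeal R I → rAnn R (lAnn R (I : Set R)) = (I : Set R)

/-- `R` is left small dual if `lr(I) = I` for every small left ideal `I`. -/
def IsLeftSmallDual (R : Type*) [Ring R] : Prop :=
  ∀ I : Ideal R, IsSmallLeftIdeal R I → lAnn R (rAnn R (I : Set R)) = (I : Set R)

/-- `R` is right dual if `rl(I) = I` for every right ideal `I`. -/
def IsRightDual (R : Type*) [Ring R] : Prop :=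
  ∀ I : Submodule Rᵐᵒᵖ R, rAnn R (lAnn R (I : Set R)) = (I : Set R)

/-- `R` is left dual if `lr(I) = I` for every left ideal `I`. -/
def IsLeftDual (R : Type*) [Ring R] : Prop :=
  ∀ I : Ideal R, lAnn R (rAnn R (I : Set R)) = (I : Set R)

/-- A right `R`-module is torsionless if its nonzero elements are separated by
right `R`-linear maps to `R`. -/
def IsTorsionlessRight (R : Type*) [Ring R] (M : Type*) [AddCommGroup M] [Module Rᵐᵒᵖ M] : Prop :=
  ∀ m : M, m ≠ 0 → ∃ f : M →ₗ[Rᵐᵒᵖ] R, f m ≠ 0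

/-- The left annihilator of a subset, as a left ideal. -/
def lAnnIdeal (R : Type*) [Ring R] (X : Set R) : Ideal R where
  carrier := {r : R | ∀ x ∈ X, r * x = 0}
  add_mem' := fun {a b} ha hb x hx => by rw [add_mul, ha x hx, hb x hx, add_zero]
  zero_mem' := fun x _ => zero_mul x
  smul_mem' := fun c a ha x hx => by
    simp only [smul_eq_mul, Set.mem_setOf_eq] at *
    rw [mul_assoc, ha x hx, mul_zero]

/-- A right ideal `I` has a weak supplement if there is a right ideal `K` with
`I + K = R` and `I ∩ K` small. -/
def HasWeakSupplementRight (R : Type*) [Ring R] (I : Submodule Rᵐᵒᵖ R) : Prop :=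
  ∃ K : Submodule Rᵐᵒᵖ R, I ⊔ K = ⊤ ∧ IsSmallRightIdeal R (I ⊓ K)

/-- A left ideal `I` has a weak supplement if there is a left ideal `K` with
`I + K = R` and `I ∩ K` small. -/
def HasWeakSupplementLeft (R : Type*) [Ring R] (I : Ideal R) : Prop :=
  ∃ K : Ideal R, I ⊔ K = ⊤ ∧ IsSmallLeftIdeal R (I ⊓ K)

/-- `R` is semilocal if `R/J(R)` is a semisimple ring (equivalently, a semisimple
left `R`-module). -/
def IsSemilocalRing (R : Type*) [Ring R] : Prop :=
  IsSemisimpleModule R (R ⧸ Ideal.jacobson (⊥ : Ideal R))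

/-- `R` is semiperfect if it is semilocal and idempotents lift modulo `J(R)`. -/
def IsSemiperfectRing (R : Type*) [Ring R] : Prop :=
  IsSemilocalRing R ∧
    ∀ a : R, a * a - a ∈ Ideal.jacobson (⊥ : Ideal R) →
      ∃ e : R, e * e = e ∧ e - a ∈ Ideal.jacobson (⊥ : Ideal R)

/-- `R` is `J`-regular if `R/J(R)` is von Neumann regular. -/
def IsJRegular (R : Type*) [Ring R] : Prop :=
  ∀ a : R, ∃ b : R, a * b * a - a ∈ Ideal.jacobson (⊥ : Ideal R)

/-- `R` is left perfect: `R/J(R)` is semisimple and `J(R)` is left T-nilpotent. -/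
def IsLeftPerfect (R : Type*) [Ring R] : Prop :=
  IsSemilocalRing R ∧
    ∀ a : ℕ → R, (∀ i, a i ∈ Ideal.jacobson (⊥ : Ideal R)) →
      ∃ n : ℕ, (List.ofFn fun i : Fin (n + 1) => a i).prod = 0

/-- A right ideal `E` is essential if `E ∩ T ≠ 0` for every nonzero right ideal `T`. -/
def IsEssentialRightIdeal (R : Type*) [Ring R] (E : Submodule Rᵐᵒᵖ R) : Prop :=
  ∀ T : Submodule Rᵐᵒᵖ R, T ≠ ⊥ → E ⊓ T ≠ ⊥

theorem aux_right_inv {R : Type*} [Ring R] {j : R}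
    (hj : j ∈ Ideal.jacobson (⊥ : Ideal R)) : ∃ z : R, (1 - j) * z = 1 := by
  have key : ∀ x ∈ Ideal.jacobson (⊥ : Ideal R), ∃ z : R, z * (1 + x) = 1 := by
    intro x hx
    obtain ⟨z, hz⟩ := Ideal.mem_jacobson_iff.1 hx 1
    refine ⟨z, ?_⟩
    rw [Ideal.mem_bot, sub_eq_zero] at hz
    rw [mul_one] at hz
    rw [mul_add, mul_one, add_comm, hz]
  obtain ⟨z, hz⟩ := key (-j) (neg_mem hj)
  obtain ⟨w, hw⟩ := key (z * j) (Ideal.mul_mem_left _ z hj)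
  have h1 : 1 + z * j = z := by
    have : z * (1 + -j) + z * j = z := by noncomm_ring
    rw [← hz]; exact this
  rw [h1] at hw
  have h2 : w = 1 - j := by
    calc w = w * (z * (1 + -j)) := by rw [hz, mul_one]
      _ = w * z * (1 + -j) := by rw [mul_assoc]
      _ = 1 - j := by rw [hw, one_mul, sub_eq_add_neg]
  exact ⟨z, by rw [← h2, hw]⟩

theorem aux_mul_mem {R : Type*} [Ring R] (I : Submodule Rᵐᵒᵖ R) {x : R} (hx : x ∈ I) (r : R) :
    x * r ∈ I := by
  have := I.smul_mem (MulOpposite.op r) hx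
  simpa using this

theorem aux_small {R : Type*} [Ring R] (I : Submodule Rᵐᵒᵖ R)
    (h : ∀ x ∈ I, x ∈ Ideal.jacobson (⊥ : Ideal R)) : IsSmallRightIdeal R I := by
  intro K hK hIK
  apply hK
  have h1 : (1 : R) ∈ I ⊔ K := by rw [hIK]; trivial
  obtain ⟨j, hj, k, hk, hjk⟩ := Submodule.mem_sup.1 h1
  obtain ⟨z, hz⟩ := aux_right_inv (h j hj)
  have hk' : k = 1 - j := by rw [← hjk]; abel
  rw [← hk'] at hz
  have h1K : (1 : R) ∈ K := hz ▸ aux_mul_mem K hk z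
  rw [eq_top_iff]
  intro x _
  simpa using aux_mul_mem K h1K x

theorem aux_exists {R : Type*} [Ring R] (hJ : IsJRegular R) (I : Submodule Rᵐᵒᵖ R)
    (s : Finset R) : (∀ a ∈ s, a ∈ I) →
      ∃ e ∈ I, ∀ a ∈ s, (1 - e) * a ∈ Ideal.jacobson (⊥ : Ideal R) := by
  classical
  induction s using Finset.induction_on with
  | empty => exact fun _ => ⟨0, I.zero_mem, by simp⟩
  | insert a s _ ih =>
    intro hs
    obtain ⟨e, he, hes⟩ := ih fun x hx => hs x (Finset.mem_insert_of_mem hx)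
    have ha : a ∈ I := hs a (Finset.mem_insert_self _ _)
    obtain ⟨b, hb⟩ := hJ ((1 - e) * a)
    have hc : (1 - e) * a ∈ I := by
      rw [sub_mul, one_mul]; exact I.sub_mem ha (aux_mul_mem I he a)
    generalize hcd : (1 - e) * a = c at hb hc
    refine ⟨e + c * (b * (1 - e)), I.add_mem he (aux_mul_mem I hc _), ?_⟩
    intro x hx
    have hE : (1 - (e + c * (b * (1 - e)))) * x = (1 - c * b) * ((1 - e) * x) := by noncomm_ring
    rw [hE]
    rcases Finset.mem_insert.1 hx with rfl | hx
    · rw [hcd]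
      have : (1 - c * b) * c = -(c * b * c - c) := by noncomm_ring
      rw [this]; exact neg_mem hb
    · exact Ideal.mul_mem_left _ _ (hes x hx)

/-- Over a `J`-regular ring `R`, for a fixed `n ≥ 1`, every
`n`-generated small right ideal is a right annihilator iff every `n`-generated right
ideal is a right annihilator. -/
theorem jRegular_nGen_small_annihilator_iff (R : Type*) [Ring R] (hJ : IsJRegular R)
    (n : ℕ) (hn : 1 ≤ n) :
    (∀ I : Submodule Rᵐᵒᵖ R, (∃ g : Fin n → R, I = Submodule.span Rᵐᵒᵖ (Set.range g)) →
        IsSmallRightIdeal R I → rAnn R (lAnn R (I : Set R)) = (I : Set R)) ↔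
    (∀ I : Submodule Rᵐᵒᵖ R, (∃ g : Fin n → R, I = Submodule.span Rᵐᵒᵖ (Set.range g)) →
        rAnn R (lAnn R (I : Set R)) = (I : Set R)) := by
  constructor
  · rintro h I ⟨g, hg⟩
    classical
    have hgI : ∀ i, g i ∈ I := fun i => hg ▸ Submodule.subset_span ⟨i, rfl⟩
    obtain ⟨e, he, heg⟩ := aux_exists hJ I (Finset.univ.image g) (by
      intro a ha
      obtain ⟨i, _, rfl⟩ := Finset.mem_image.1 ha
      exact hgI i)
    let φ : R →ₗ[Rᵐᵒᵖ] R :=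
      { toFun := fun x => (1 - e) * x
        map_add' := fun x y => mul_add _ x y
        map_smul' := fun r x => by simp [MulOpposite.smul_eq_mul_unop, mul_assoc] }
    have hφ : ∀ x, φ x = (1 - e) * x := fun _ => rfl
    have hmap : I.map φ = Submodule.span Rᵐᵒᵖ (Set.range (φ ∘ g)) := by
      rw [hg, Submodule.map_span, Set.range_comp]
    have hIJ : ∀ x ∈ I, (1 - e) * x ∈ Ideal.jacobson (⊥ : Ideal R) := by
      intro x hx
      rw [hg] at hx
      induction hx using Submodule.span_induction with
      | mem x hx =>
        obtain ⟨i, rfl⟩ := hx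
        exact heg _ (Finset.mem_image_of_mem _ (Finset.mem_univ _))
      | zero => simp
      | add x y _ _ hx hy => rw [mul_add]; exact add_mem hx hy
      | smul r x _ hx =>
        rw [MulOpposite.smul_eq_mul_unop, ← mul_assoc]
        exact Ideal.mul_mem_right _ _ hx
    have hsmall : IsSmallRightIdeal R (I.map φ) := aux_small _ (by
      rintro _ ⟨x, hx, rfl⟩
      exact hIJ x hx)
    have hann := h (I.map φ) ⟨_, hmap⟩ hsmall
    apply Set.Subset.antisymm
    · intro x hx
      have hfx : (1 - e) * x ∈ rAnn R (lAnn R ((I.map φ : Submodule Rᵐᵒᵖ R) : Set R)) := by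
        intro r hr
        rw [← mul_assoc]
        apply hx
        intro y hy
        rw [mul_assoc]
        exact hr _ ⟨y, hy, rfl⟩
      rw [hann] at hfx
      obtain ⟨y, hy, hyx⟩ := hfx
      have hyx' : (1 - e) * y = (1 - e) * x := hyx
      have : x = e * x + (y - e * y) := by
        have h3 : y - e * y = (1 - e) * y := by noncomm_ring
        rw [h3, hyx']; noncomm_ring
      show x ∈ I
      rw [this]
      exact I.add_mem (aux_mul_mem I he x) (I.sub_mem hy (aux_mul_mem I he y))
    · intro x hx r hr
      exact hr x hx
  · intro h I hI _
    exact h I hI
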